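/- arXiv:2301.01632 — 4 statements merged into one kernel-verified Lean document; each statement's English description precedes it below -/
import Mathlib

section
/- Let d ≥ 2, let κ > 1, let μ be a finite measure on ℝ supported on [1,∞), and let μ_κ := μ + Σ_{i=1}^∞ 𝒯_{κ^i}(μ|_{[1,κ]}). Then for every integer j ≥ 1, 𝒯_{κ^j}(μ_κ|_{(0,κ^j]}) = 𝒯_{κ^j}(μ|_{[1,κ^j]}) + Σ_{k=j+1}^∞ 𝒯_{κ^k}(μ|_{[1,κ]}). -/
open MeasureTheory

/-- The scaling operator `𝒯_m ν := m^d • (pushforward of ν under r ↦ r/m)`. -/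
noncomputable def scaleMeasure (d : ℕ) (m : ℝ) (ν : Measure ℝ) : Measure ℝ :=
  (ENNReal.ofReal m) ^ d • Measure.map (fun r : ℝ => r / m) ν

/-- The multiscale radius distribution `μ_κ := μ + Σ_{i=1}^∞ 𝒯_{κ^i}(μ|_{[1,κ]})`. -/
noncomputable def multiscaleMeasure (d : ℕ) (κ : ℝ) (μ : Measure ℝ) : Measure ℝ :=
  μ + Measure.sum (fun i : ℕ => scaleMeasure d (κ ^ (i + 1)) (μ.restrict (Set.Icc 1 κ)))

theorem scale_aux_add (d : ℕ) (m : ℝ) (ν₁ ν₂ : Measure ℝ) :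
    scaleMeasure d m (ν₁ + ν₂) = scaleMeasure d m ν₁ + scaleMeasure d m ν₂ := by
  unfold scaleMeasure
  rw [Measure.map_add _ _ (by fun_prop), smul_add]

theorem scale_aux_sum (d : ℕ) (m : ℝ) (ν : ℕ → Measure ℝ) :
    scaleMeasure d m (Measure.sum ν) = Measure.sum (fun i => scaleMeasure d m (ν i)) := by
  have hm : Measurable (fun r : ℝ => r / m) := by fun_prop
  ext s hs
  simp only [scaleMeasure, Measure.smul_apply, Measure.map_apply hm hs,
    Measure.sum_apply _ hs, Measure.sum_apply _ (hm hs), smul_eq_mul, ENNReal.tsum_mul_left]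

theorem scale_aux_scale (d : ℕ) (m n : ℝ) (hm : 0 ≤ m) (ν : Measure ℝ) :
    scaleMeasure d m (scaleMeasure d n ν) = scaleMeasure d (m * n) ν := by
  unfold scaleMeasure
  rw [Measure.map_smul, Measure.map_map (by fun_prop) (by fun_prop), smul_smul,
    ENNReal.ofReal_mul hm, mul_pow]
  congr 2
  funext r
  simp only [Function.comp]
  rw [div_div, mul_comm]

theorem scale_aux_restrict (d : ℕ) (κ : ℝ) (hκ : 1 < κ) (μ : Measure ℝ) (i j : ℕ) :
    (scaleMeasure d (κ ^ (i + 1)) (μ.restrict (Set.Icc 1 κ))).restrict (Set.Ioc 0 (κ ^ j))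
      = scaleMeasure d (κ ^ (i + 1)) (μ.restrict (Set.Icc 1 κ)) := by
  have h0 : (0 : ℝ) < κ ^ (i + 1) := by positivity
  have hm : Measurable (fun r : ℝ => r / κ ^ (i + 1)) := by fun_prop
  unfold scaleMeasure
  rw [Measure.restrict_smul, Measure.restrict_map hm measurableSet_Ioc,
    Measure.restrict_restrict (hm measurableSet_Ioc)]
  congr 3
  apply Set.inter_eq_right.mpr
  rintro r ⟨h1, h2⟩
  refine ⟨by positivity, ?_⟩
  have h3 : (1 : ℝ) ≤ κ ^ j := one_le_pow₀ hκ.le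
  have h4 : κ ≤ κ ^ (i + 1) := le_self_pow₀ hκ.le (by omega)
  have h5 : r / κ ^ (i + 1) ≤ 1 := (div_le_one h0).mpr (h2.trans h4)
  exact h5.trans h3

/-- For every integer `j ≥ 1`,
`𝒯_{κ^j}(μ_κ|_{(0,κ^j]}) = 𝒯_{κ^j}(μ|_{[1,κ^j]}) + Σ_{k=j+1}^∞ 𝒯_{κ^k}(μ|_{[1,κ]})`. -/
theorem stmt_3 (d : ℕ) (hd : 2 ≤ d) (κ : ℝ) (hκ : 1 < κ)
    (μ : Measure ℝ) [IsFiniteMeasure μ] (hμ : μ (Set.Iio 1) = 0)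
    (j : ℕ) (hj : 1 ≤ j) :
    scaleMeasure d (κ ^ j) ((multiscaleMeasure d κ μ).restrict (Set.Ioc 0 (κ ^ j)))
      = scaleMeasure d (κ ^ j) (μ.restrict (Set.Icc 1 (κ ^ j)))
        + Measure.sum
            (fun k : ℕ => scaleMeasure d (κ ^ (j + 1 + k)) (μ.restrict (Set.Icc 1 κ))) := by
  unfold multiscaleMeasure
  have hr : μ.restrict (Set.Ioc 0 (κ ^ j)) = μ.restrict (Set.Icc 1 (κ ^ j)) := by
    apply Measure.restrict_congr_set
    have h : ∀ᵐ x ∂μ, ¬ x < 1 := by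
      rw [ae_iff]
      simpa [Set.Iio] using hμ
    filter_upwards [h] with x hx
    apply propext
    change (0 < x ∧ x ≤ κ ^ j) ↔ (1 ≤ x ∧ x ≤ κ ^ j)
    constructor
    · rintro ⟨_, h2⟩
      exact ⟨not_lt.mp hx, h2⟩
    · rintro ⟨h1, h2⟩
      exact ⟨by linarith, h2⟩
  rw [Measure.restrict_add, Measure.restrict_sum _ measurableSet_Ioc, hr, scale_aux_add,
    scale_aux_sum]
  congr 2
  funext i
  rw [scale_aux_restrict d κ hκ, scale_aux_scale _ _ _ (by positivity), ← pow_add]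
  congr 2
  omega
end

section
/- Let d ≥ 2 and let μ be a finite measure on [1,∞). Assume there exists κ_0 > 1 such that for all κ ≥ κ_0, all a ≥ κ, and all r ≥ 1 one has a^d · μ([a r, a κ]) ≤ μ([r, κ]). Then for every κ ≥ κ_0, every integer k ≥ 1, and every s > 0, (𝒯_{κ^k}(μ|_{[κ^k, κ^{k+1}]}))([s,∞)) ≤ (μ|_{[1,κ]})([s,∞)); that is, the measure 𝒯_{κ^k}(μ|_{[κ^k, κ^{k+1}]}) is stochastically dominated by μ|_{[1,κ]}. -/
open MeasureTheory

/-- Under the regularity hypothesis, for every `κ ≥ κ₀`, `k ≥ 1` and `s > 0`,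
the measure `𝒯_{κ^k}(μ|_{[κ^k, κ^{k+1}]})` is stochastically dominated by `μ|_{[1,κ]}`. -/
theorem stmt_4 (d : ℕ) (hd : 2 ≤ d)
    (μ : Measure ℝ) [IsFiniteMeasure μ] (hμ : μ (Set.Iio 1) = 0)
    (κ₀ : ℝ) (hκ₀ : 1 < κ₀)
    (hreg : ∀ κ ≥ κ₀, ∀ a ≥ κ, ∀ r ≥ (1 : ℝ),
      ENNReal.ofReal (a ^ d) * μ (Set.Icc (a * r) (a * κ)) ≤ μ (Set.Icc r κ)) :
    ∀ κ ≥ κ₀, ∀ k : ℕ, 1 ≤ k → ∀ s > (0 : ℝ),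
      scaleMeasure d (κ ^ k) (μ.restrict (Set.Icc (κ ^ k) (κ ^ (k + 1)))) (Set.Ici s)
        ≤ (μ.restrict (Set.Icc 1 κ)) (Set.Ici s) := by
  intro κ hκ k hk s hs
  have h1 : 1 < κ := lt_of_lt_of_le hκ₀ hκ
  have hm : 0 < κ ^ k := by positivity
  have ha : κ ≤ κ ^ k := le_self_pow₀ h1.le (by omega)
  have h := hreg κ hκ (κ ^ k) ha (max s 1) (le_max_right _ _)
  have hmeas : Measurable (fun r : ℝ => r / κ ^ k) := measurable_id.div_const _
  have e1 : (fun r : ℝ => r / κ ^ k) ⁻¹' Set.Ici s ∩ Set.Icc (κ ^ k) (κ ^ (k + 1))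
      = Set.Icc (κ ^ k * max s 1) (κ ^ k * κ) := by
    ext x
    simp only [Set.mem_inter_iff, Set.mem_preimage, Set.mem_Ici, Set.mem_Icc, le_div_iff₀ hm,
      mul_max_of_nonneg _ _ hm.le, max_le_iff, pow_succ, mul_one, mul_comm s, and_assoc]
  have e2 : Set.Ici s ∩ Set.Icc 1 κ = Set.Icc (max s 1) κ := by
    ext x
    simp only [Set.mem_inter_iff, Set.mem_Ici, Set.mem_Icc, max_le_iff, and_assoc]
  rw [scaleMeasure, Measure.smul_apply, Measure.map_apply hmeas measurableSet_Ici,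
    Measure.restrict_apply (hmeas measurableSet_Ici), Measure.restrict_apply measurableSet_Ici,
    e1, e2, smul_eq_mul, ← ENNReal.ofReal_pow hm.le]
  exact h
end

section
/- Let d ≥ 2 and let μ be a finite measure on [1,∞). Assume there exists κ_0 > 1 such that for all κ ≥ κ_0, all a ≥ κ, and all r ≥ 1 one has a^d · μ([a r, a κ]) ≤ μ([r, κ]). Let κ ≥ κ_0 and let μ_κ := μ + Σ_{i=1}^∞ 𝒯_{κ^i}(μ|_{[1,κ]}). Then for every integer j ≥ 1 and every s > 0, (𝒯_{κ^j}(μ_κ|_{(0,κ^j]}))([s,∞)) ≤ (μ_κ|_{(0,1]})([s,∞)); that is, 𝒯_{κ^j}(μ_κ|_{(0,κ^j]}) is stochastically dominated by μ_κ|_{(0,1]}. -/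
open MeasureTheory

lemma scale_Icc (d : ℕ) (m : ℝ) (hm : 0 < m) (ν : Measure ℝ) (a b : ℝ) :
    scaleMeasure d m ν (Set.Icc a b) = ENNReal.ofReal m ^ d * ν (Set.Icc (m * a) (m * b)) := by
  unfold scaleMeasure
  rw [Measure.smul_apply, Measure.map_apply (by fun_prop) measurableSet_Icc, smul_eq_mul]
  congr 2
  ext x
  simp only [Set.mem_preimage, Set.mem_Icc, le_div_iff₀ hm, div_le_iff₀ hm, mul_comm]

lemma multi_Icc (d : ℕ) (κ : ℝ) (hκ : 0 < κ) (μ : Measure ℝ) (a b : ℝ) :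
    multiscaleMeasure d κ μ (Set.Icc a b) = μ (Set.Icc a b) +
      ∑' i : ℕ, ENNReal.ofReal (κ ^ (i + 1)) ^ d *
        μ.restrict (Set.Icc 1 κ) (Set.Icc (κ ^ (i + 1) * a) (κ ^ (i + 1) * b)) := by
  unfold multiscaleMeasure
  rw [Measure.add_apply, Measure.sum_apply _ measurableSet_Icc]
  congr 1
  exact tsum_congr fun i => scale_Icc d _ (by positivity) _ _ _

lemma cover (κ : ℝ) (h1 : 1 < κ) (j : ℕ) (hj : 1 ≤ j) (s : ℝ) :
    Set.Icc (κ ^ j * s) (κ ^ j) ⊆ Set.Iio 1 ∪ ⋃ i ∈ Finset.range j,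
      Set.Icc (κ ^ (j - 1 - i) * max 1 (κ ^ (i + 1) * s)) (κ ^ (j - 1 - i) * κ) := by
  intro x hx
  by_cases hx1 : x < 1
  · exact Or.inl hx1
  right
  push Not at hx1
  have key : ∃ n < j, κ ^ n ≤ x ∧ x ≤ κ ^ (n + 1) := by
    rcases eq_or_lt_of_le hx1 with h | h
    · exact ⟨0, hj, by simp [h], by simp only [zero_add, pow_one]; linarith⟩
    · have hex : ∃ n, x ≤ κ ^ n := ⟨j, hx.2⟩
      classical
      have hf := Nat.find_spec hex
      have hle : Nat.find hex ≤ j := Nat.find_min' hex hx.2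
      rcases hn : Nat.find hex with _ | n
      · rw [hn] at hf; simp at hf; linarith
      · refine ⟨n, by omega, ?_, by rwa [hn] at hf⟩
        exact (not_le.mp (Nat.find_min hex (m := n) (by omega))).le
  obtain ⟨n, hn, ha, hb⟩ := key
  simp only [Set.mem_iUnion, Finset.mem_range]
  refine ⟨j - 1 - n, by omega, ?_⟩
  have e : j - 1 - (j - 1 - n) = n := by omega
  rw [e]
  have hp : 0 < κ ^ n := by positivity
  refine ⟨?_, by rwa [pow_succ] at hb⟩
  rw [mul_max_of_nonneg _ _ hp.le, mul_one, ← mul_assoc, ← pow_add]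
  have e2 : n + (j - 1 - n + 1) = j := by omega
  rw [e2]
  exact max_le ha hx.1

/-- Under the regularity hypothesis, for every `j ≥ 1` and `s > 0`,
`𝒯_{κ^j}(μ_κ|_{(0,κ^j]})` is stochastically dominated by `μ_κ|_{(0,1]}`. -/
theorem stmt_5 (d : ℕ) (hd : 2 ≤ d)
    (μ : Measure ℝ) [IsFiniteMeasure μ] (hμ : μ (Set.Iio 1) = 0)
    (κ₀ : ℝ) (hκ₀ : 1 < κ₀)
    (hreg : ∀ κ ≥ κ₀, ∀ a ≥ κ, ∀ r ≥ (1 : ℝ),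
      ENNReal.ofReal (a ^ d) * μ (Set.Icc (a * r) (a * κ)) ≤ μ (Set.Icc r κ))
    (κ : ℝ) (hκ : κ₀ ≤ κ) (j : ℕ) (hj : 1 ≤ j) (s : ℝ) (hs : 0 < s) :
    scaleMeasure d (κ ^ j)
        ((multiscaleMeasure d κ μ).restrict (Set.Ioc 0 (κ ^ j))) (Set.Ici s)
      ≤ ((multiscaleMeasure d κ μ).restrict (Set.Ioc 0 1)) (Set.Ici s) := by
  have h1 : 1 < κ := lt_of_lt_of_le hκ₀ hκ
  have h0 : 0 < κ := by linarith
  have hM : 0 < κ ^ j := by positivity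
  have hL : scaleMeasure d (κ ^ j)
      ((multiscaleMeasure d κ μ).restrict (Set.Ioc 0 (κ ^ j))) (Set.Ici s) =
      ENNReal.ofReal (κ ^ j) ^ d * multiscaleMeasure d κ μ (Set.Icc (κ ^ j * s) (κ ^ j)) := by
    unfold scaleMeasure
    have hms : Measurable (fun r : ℝ => r / κ ^ j) := by fun_prop
    rw [Measure.smul_apply, Measure.map_apply hms measurableSet_Ici, smul_eq_mul,
      Measure.restrict_apply (hms measurableSet_Ici)]
    congr 2
    ext x
    simp only [Set.mem_inter_iff, Set.mem_preimage, Set.mem_Ici, Set.mem_Icc, Set.mem_Ioc,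
      le_div_iff₀ hM, mul_comm]
    have := mul_pos hM hs
    constructor
    · rintro ⟨a, b, c⟩; exact ⟨a, c⟩
    · rintro ⟨a, c⟩; exact ⟨a, by linarith, c⟩
  have hR : ((multiscaleMeasure d κ μ).restrict (Set.Ioc 0 1)) (Set.Ici s) =
      multiscaleMeasure d κ μ (Set.Icc s 1) := by
    rw [Measure.restrict_apply measurableSet_Ici]
    congr 1
    ext x
    simp only [Set.mem_inter_iff, Set.mem_Ici, Set.mem_Icc, Set.mem_Ioc]
    constructor
    · rintro ⟨a, b, c⟩; exact ⟨a, c⟩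
    · rintro ⟨a, c⟩; exact ⟨a, by linarith, c⟩
  rw [hL, hR, multi_Icc d κ h0, multi_Icc d κ h0, mul_add, ← ENNReal.tsum_mul_left]
  refine le_trans ?_ le_add_self
  rw [← Summable.sum_add_tsum_nat_add' (k := j) (f := fun i : ℕ =>
    ENNReal.ofReal (κ ^ (i + 1)) ^ d *
      μ.restrict (Set.Icc 1 κ) (Set.Icc (κ ^ (i + 1) * s) (κ ^ (i + 1) * 1))) ENNReal.summable]
  refine add_le_add ?_ ?_
  · have hc : μ (Set.Icc (κ ^ j * s) (κ ^ j)) ≤ ∑ i ∈ Finset.range j,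
        μ (Set.Icc (κ ^ (j - 1 - i) * max 1 (κ ^ (i + 1) * s)) (κ ^ (j - 1 - i) * κ)) := by
      refine (measure_mono (cover κ h1 j hj s)).trans ((measure_union_le _ _).trans ?_)
      rw [hμ, zero_add]
      exact measure_biUnion_finset_le _ _
    refine (mul_le_mul_right hc _).trans ?_
    rw [Finset.mul_sum]
    refine Finset.sum_le_sum fun i hi => ?_
    have hij : i < j := Finset.mem_range.mp hi
    have e : j = (i + 1) + (j - 1 - i) := by omega
    have e1 : ENNReal.ofReal (κ ^ j) ^ d =
        ENNReal.ofReal (κ ^ (i + 1)) ^ d * ENNReal.ofReal ((κ ^ (j - 1 - i)) ^ d) := by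
      conv_lhs => rw [e]
      rw [pow_add, ENNReal.ofReal_mul (by positivity), mul_pow,
        ENNReal.ofReal_pow (p := κ ^ (j - 1 - i)) (by positivity)]
    rw [e1, mul_assoc]
    refine mul_le_mul_right ?_ _
    have e3 : μ.restrict (Set.Icc 1 κ) (Set.Icc (κ ^ (i + 1) * s) (κ ^ (i + 1) * 1)) =
        μ (Set.Icc (max 1 (κ ^ (i + 1) * s)) κ) := by
      have hk : κ ≤ κ ^ (i + 1) := le_self_pow₀ h1.le (by omega)
      rw [Measure.restrict_apply measurableSet_Icc, Set.Icc_inter_Icc, mul_one]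
      congr 2
      · exact max_comm _ _
      · exact min_eq_right hk
    rw [e3]
    rcases Nat.eq_zero_or_pos (j - 1 - i) with hz | hp
    · simp [hz]
    · exact hreg κ hκ _ (le_self_pow₀ h1.le (by omega)) _ (le_max_left _ _)
  · refine le_of_eq (tsum_congr fun i => ?_)
    have e1 : κ ^ (i + j + 1) = κ ^ (i + 1) * κ ^ j := by ring
    rw [e1, ENNReal.ofReal_mul (by positivity), mul_pow, mul_one, ← mul_assoc, ← mul_assoc,
      mul_comm (ENNReal.ofReal (κ ^ j) ^ d)]
end

section
/- Let d ≥ 2, let δ > 0, and let f : [1,∞) → ℝ be a non-increasing measurable function with 0 < inf f ≤ sup f < ∞. Let μ be the measure on ℝ with density f(r) · r^{-(d+1+δ)} · 1_{r ≥ 1} with respect to Lebesgue measure. Then there exists κ_0 > 1 such that for all κ ≥ κ_0, all a ≥ κ, and all r ≥ 1, one has a^d · μ([a r, a κ]) ≤ μ([r, κ]). In particular, any κ_0 ≥ (sup f / inf f)^{1/δ} with κ_0 > 1 works. -/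
open MeasureTheory

/-- The measure with density `f(r) r^{-(d+1+δ)} 1_{r ≥ 1}` with respect to Lebesgue measure
satisfies the regularity hypothesis; in particular one can take any
`κ₀ > 1` with `κ₀ ≥ (sup f / inf f)^{1/δ}`. -/
theorem stmt_9 (d : ℕ) (hd : 2 ≤ d) (δ : ℝ) (hδ : 0 < δ)
    (f : ℝ → ℝ) (hf_meas : Measurable f) (hf_anti : AntitoneOn f (Set.Ici 1))
    (hf_inf : 0 < sInf (f '' Set.Ici 1)) (hf_bdd : BddAbove (f '' Set.Ici 1))
    (μ : Measure ℝ)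
    (hμ : μ = volume.withDensity
      (Set.indicator (Set.Ici 1)
        (fun r : ℝ => ENNReal.ofReal (f r * r ^ (-(d + 1 + δ : ℝ)))))) :
    (∃ κ₀ : ℝ, 1 < κ₀ ∧ ∀ κ ≥ κ₀, ∀ a ≥ κ, ∀ r ≥ (1 : ℝ),
        ENNReal.ofReal (a ^ d) * μ (Set.Icc (a * r) (a * κ)) ≤ μ (Set.Icc r κ))
      ∧ ∀ κ₀ : ℝ, 1 < κ₀ →
          (sSup (f '' Set.Ici 1) / sInf (f '' Set.Ici 1)) ^ (1 / δ) ≤ κ₀ →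
          ∀ κ ≥ κ₀, ∀ a ≥ κ, ∀ r ≥ (1 : ℝ),
            ENNReal.ofReal (a ^ d) * μ (Set.Icc (a * r) (a * κ)) ≤ μ (Set.Icc r κ) := by
  have hbb : BddBelow (f '' Set.Ici 1) := by
    by_contra h
    rw [Real.sInf_of_not_bddBelow h] at hf_inf
    exact lt_irrefl _ hf_inf
  have hpos : ∀ x, 1 ≤ x → 0 ≤ f x := fun x hx =>
    hf_inf.le.trans (csInf_le hbb ⟨x, hx, rfl⟩)
  have key : ∀ κ a r : ℝ, 1 < a → 1 ≤ r →
      ENNReal.ofReal (a ^ d) * μ (Set.Icc (a * r) (a * κ)) ≤ μ (Set.Icc r κ) := by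
    intro κ a r ha hr
    have ha0 : 0 < a := by linarith
    have himg : Set.Icc (a * r) (a * κ) = (fun x => a * x) '' Set.Icc r κ := by
      rw [Set.image_mul_left_Icc' ha0]
    have hderiv : ∀ x ∈ Set.Icc r κ, HasDerivWithinAt (fun x => a * x) a (Set.Icc r κ) x := by
      intro x _
      simpa using ((hasDerivAt_id x).const_mul a).hasDerivWithinAt
    have hinj : Set.InjOn (fun x => a * x) (Set.Icc r κ) :=
      fun x _ y _ h => mul_left_cancel₀ ha0.ne' h
    rw [hμ, withDensity_apply _ measurableSet_Icc, withDensity_apply _ measurableSet_Icc, himg,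
      lintegral_image_eq_lintegral_abs_deriv_mul measurableSet_Icc hderiv hinj,
      ← lintegral_const_mul' _ _ ENNReal.ofReal_ne_top]
    refine setLIntegral_mono' measurableSet_Icc ?_
    intro x hx
    have hx1 : 1 ≤ x := hr.trans hx.1
    have hx0 : 0 < x := by linarith
    have hax : x ≤ a * x := by nlinarith
    have hax1 : 1 ≤ a * x := hx1.trans hax
    rw [Set.indicator_of_mem (show a * x ∈ Set.Ici 1 from hax1),
      Set.indicator_of_mem (show x ∈ Set.Ici 1 from hx1), abs_of_pos ha0,
      ← ENNReal.ofReal_mul ha0.le, ← ENNReal.ofReal_mul (by positivity)]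
    apply ENNReal.ofReal_le_ofReal
    have h1 : f (a * x) ≤ f x := hf_anti hx1 hax1 hax
    have h2 : a ^ d * a * a ^ (-(d + 1 + δ : ℝ)) ≤ 1 := by
      have : a ^ d * a * a ^ (-(d + 1 + δ : ℝ)) = a ^ (-δ) := by
        rw [← pow_succ, ← Real.rpow_natCast, ← Real.rpow_add ha0]
        congr 1
        push_cast
        ring
      rw [this]
      exact Real.rpow_le_one_of_one_le_of_nonpos ha.le (by linarith)
    rw [Real.mul_rpow ha0.le hx0.le]
    have h3 : 0 ≤ x ^ (-(d + 1 + δ : ℝ)) := by positivity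
    have h4 := hpos _ hax1
    calc a ^ d * (a * (f (a * x) * (a ^ (-(d + 1 + δ : ℝ)) * x ^ (-(d + 1 + δ : ℝ)))))
        = (a ^ d * a * a ^ (-(d + 1 + δ : ℝ))) * (f (a * x) * x ^ (-(d + 1 + δ : ℝ))) := by ring
      _ ≤ 1 * (f (a * x) * x ^ (-(d + 1 + δ : ℝ))) :=
          mul_le_mul_of_nonneg_right h2 (mul_nonneg h4 h3)
      _ ≤ f x * x ^ (-(d + 1 + δ : ℝ)) := by
          rw [one_mul]
          exact mul_le_mul_of_nonneg_right h1 h3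
  refine ⟨⟨2, by norm_num, fun κ hκ a ha r hr => key κ a r (by linarith) hr⟩, ?_⟩
  intro κ₀ h0 _ κ hκ a ha r hr
  exact key κ a r (by linarith) hr
end
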